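/- arXiv:2011.04326 — 2 statements merged into one kernel-verified Lean document; each statement's English description precedes it below -/
import Mathlib

section
/- Let a ≥ 1 and 1 ≤ k ≤ a be integers, and let T_a be the triangle in ℝ² with vertices (ρ_i, ρ_i²) for i = 1,2,3, where ρ₁, ρ₂, ρ₃ are the roots of f_a. Then the number of lattice points in the dilate kT_a equals k²(a²+3a+9)/2 + 1 if k is even, and k²(a²+3a+9)/2 - 1/2 if k is odd. -/
lemma aux_strip (l h : ℤ → ℤ) (n : ℕ) (hlh : ∀ i : ℤ, 0 ≤ i → i < n → l i ≤ h i) :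
    {p : ℤ × ℤ | 0 ≤ p.2 ∧ p.2 < n ∧ l p.2 < p.1 ∧ p.1 ≤ h p.2}.Finite ∧
    (({p : ℤ × ℤ | 0 ≤ p.2 ∧ p.2 < n ∧ l p.2 < p.1 ∧ p.1 ≤ h p.2}.ncard : ℕ) : ℤ)
      = ∑ i ∈ Finset.range n, (h i - l i) := by
  induction n with
  | zero =>
    have : {p : ℤ × ℤ | 0 ≤ p.2 ∧ p.2 < (0:ℕ) ∧ l p.2 < p.1 ∧ p.1 ≤ h p.2} = ∅ := by
      ext p; simp; intros; omega
    rw [this]; simp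
  | succ n ih =>
    obtain ⟨hf, hc⟩ := ih (fun i h0 h1 => hlh i h0 (by push_cast; omega))
    have hE : {p : ℤ × ℤ | 0 ≤ p.2 ∧ p.2 < (n+1:ℕ) ∧ l p.2 < p.1 ∧ p.1 ≤ h p.2} =
      {p : ℤ × ℤ | 0 ≤ p.2 ∧ p.2 < n ∧ l p.2 < p.1 ∧ p.1 ≤ h p.2} ∪
      (((Finset.Ioc (l n) (h n)).image (fun u => (u, (n:ℤ))) : Finset (ℤ × ℤ)) : Set (ℤ × ℤ)) := by
      ext ⟨u, v⟩
      simp only [Set.mem_ofPred_eq, Set.mem_union, Finset.mem_coe, Finset.mem_image, Finset.mem_Ioc,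
        Prod.mk.injEq]
      constructor
      · rintro ⟨h0, h1, h2, h3⟩
        by_cases hv : v < n
        · exact Or.inl ⟨h0, hv, h2, h3⟩
        · have : v = n := by push_cast at h1; omega
          subst this
          exact Or.inr ⟨u, ⟨h2, h3⟩, rfl, rfl⟩
      · rintro (⟨h0, h1, h2, h3⟩ | ⟨u', ⟨h2, h3⟩, rfl, rfl⟩)
        · exact ⟨h0, by push_cast; omega, h2, h3⟩
        · exact ⟨by omega, by push_cast; omega, h2, h3⟩
    have hd : Disjoint {p : ℤ × ℤ | 0 ≤ p.2 ∧ p.2 < n ∧ l p.2 < p.1 ∧ p.1 ≤ h p.2}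
      (((Finset.Ioc (l n) (h n)).image (fun u => (u, (n:ℤ))) : Finset (ℤ × ℤ)) : Set (ℤ × ℤ)) := by
      rw [Set.disjoint_left]
      rintro ⟨u, v⟩ ⟨_, h1, _⟩ hm
      simp only [Finset.mem_coe, Finset.mem_image, Prod.mk.injEq] at hm
      obtain ⟨_, _, _, rfl⟩ := hm
      simp at h1
    rw [hE]
    refine ⟨hf.union (Finset.finite_toSet _), ?_⟩
    rw [Set.ncard_union_eq hd hf (Finset.finite_toSet _), Set.ncard_coe_finset,
      Finset.card_image_of_injective _ (fun x y hxy => by simpa using hxy), Int.card_Ioc,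
      Finset.sum_range_succ]
    push_cast
    rw [hc]
    have := hlh n (by omega) (by push_cast; omega)
    rw [Int.toNat_of_nonneg (by omega)]

/-- the correction term -/
def auxE (k V : ℤ) : ℤ := if 2 * V < k then 1 else 0

def auxBad (a k U V : ℤ) : Prop := 0 ≤ V ∧ V < k ∧ (a+1)*V + 2*k - auxE k V < U

lemma aux_sumE (k : ℤ) (hk : 0 ≤ k) (n : ℕ) :
    ∑ i ∈ Finset.range n, auxE k i = min (n:ℤ) ((k+1)/2) := by
  induction n with
  | zero => simp; omega
  | succ n ih =>
    rw [Finset.sum_range_succ, ih, auxE]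
    push_cast
    split_ifs <;> omega

lemma aux_sum1 (N : ℤ) (n : ℕ) :
    2 * ∑ i ∈ Finset.range n, (N - (i:ℤ) - (-1)) = 2*n*(N+1) - n*(n-1) := by
  induction n with
  | zero => simp
  | succ n ih =>
    rw [Finset.sum_range_succ, mul_add, ih]; push_cast; ring

lemma aux_sum2 (a k : ℤ) (hk : 0 ≤ k) (n : ℕ) :
    2 * ∑ i ∈ Finset.range n, ((a+3)*k - (i:ℤ) - ((a+1)*i+2*k-auxE k i))
      = 2*n*((a+1)*k) - (a+2)*(n*(n-1)) + 2 * min (n:ℤ) ((k+1)/2) := by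
  rw [← aux_sumE k hk]
  induction n with
  | zero => simp
  | succ n ih =>
    rw [Finset.sum_range_succ, mul_add, ih, Finset.sum_range_succ]; push_cast; ring

lemma aux_count (a k : ℤ) (hk1 : 1 ≤ k) (hka : k ≤ a) :
    2 * (({p : ℤ × ℤ | 0 ≤ p.1 ∧ 0 ≤ p.2 ∧ p.1 + p.2 ≤ (a+3)*k ∧ ¬ auxBad a k p.1 p.2 ∧
      ¬ auxBad a k p.2 ((a+3)*k - p.1 - p.2) ∧ ¬ auxBad a k ((a+3)*k - p.1 - p.2) p.1}.ncard : ℕ) : ℤ)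
    = k^2*(a^2+3*a+9) + 3*k + 2 - 6 * ((k+1)/2) := by
  set N := (a+3)*k with hN
  have hN0 : 0 ≤ N := by rw [hN]; exact mul_nonneg (by omega) (by omega)
  obtain ⟨hDf, hDc⟩ := aux_strip (fun _ => -1) (fun v => N - v) (N+1).toNat (by
    intro i h0 h1; omega)
  obtain ⟨hBf, hBc⟩ := aux_strip (fun v => (a+1)*v+2*k-auxE k v) (fun v => N - v) k.toNat (by
    intro i h0 h1
    have h1' : i ≤ k - 1 := by omega
    have : auxE k i ≥ 0 := by unfold auxE; split_ifs <;> simp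
    nlinarith)
  have e1 := aux_sum1 N (N+1).toNat
  have e2 := aux_sum2 a k (by omega) k.toNat
  have hk' : ((k.toNat : ℕ) : ℤ) = k := Int.toNat_of_nonneg (by omega)
  have hN' : (((N+1).toNat : ℕ) : ℤ) = N+1 := Int.toNat_of_nonneg (by omega)
  rw [hk'] at e2 hBf hBc
  rw [hN'] at e1 hDf hDc
  rw [min_eq_right (by omega)] at e2
  rw [← hDc] at e1
  rw [← hN, ← hBc] at e2
  set D := {p : ℤ × ℤ | 0 ≤ p.2 ∧ p.2 < N+1 ∧ (fun _ : ℤ => (-1:ℤ)) p.2 < p.1 ∧ p.1 ≤ (fun v => N - v) p.2} with hD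
  set B := {p : ℤ × ℤ | 0 ≤ p.2 ∧ p.2 < k ∧ (fun v => (a+1)*v+2*k-auxE k v) p.2 < p.1 ∧ p.1 ≤ (fun v => N - v) p.2} with hB
  set S := {p : ℤ × ℤ | 0 ≤ p.1 ∧ 0 ≤ p.2 ∧ p.1 + p.2 ≤ N ∧ ¬ auxBad a k p.1 p.2 ∧
      ¬ auxBad a k p.2 (N - p.1 - p.2) ∧ ¬ auxBad a k (N - p.1 - p.2) p.1} with hS
  have bad_imp : ∀ U V, auxBad a k U V → 0 ≤ V ∧ V < k ∧ 2*k ≤ U := by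
    rintro U V ⟨h0, h1, h2⟩
    refine ⟨h0, h1, ?_⟩
    have : auxE k V ≤ 1 := by unfold auxE; split_ifs <;> simp
    nlinarith
  have memB : ∀ U V, (U, V) ∈ B ↔ auxBad a k U V ∧ U + V ≤ N := by
    intro U V
    simp only [hB, Set.mem_ofPred_eq, auxBad]
    constructor
    · rintro ⟨h0, h1, h2, h3⟩; exact ⟨⟨h0, h1, h2⟩, by omega⟩
    · rintro ⟨⟨h0, h1, h2⟩, h3⟩; exact ⟨h0, h1, h2, by omega⟩
  let φ : ℤ × ℤ → ℤ × ℤ := fun p => (N - p.1 - p.2, p.1)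
  let ψ : ℤ × ℤ → ℤ × ℤ := fun p => (p.2, N - p.1 - p.2)
  have hφ : Function.Injective φ := by
    rintro ⟨u, v⟩ ⟨u', v'⟩ h
    simp only [φ, Prod.mk.injEq] at h ⊢; omega
  have hψ : Function.Injective ψ := by
    rintro ⟨u, v⟩ ⟨u', v'⟩ h
    simp only [ψ, Prod.mk.injEq] at h ⊢; omega
  have memφ : ∀ U V, (U, V) ∈ φ '' B ↔ auxBad a k V (N - U - V) ∧ 0 ≤ U := by
    intro U V
    constructor
    · rintro ⟨⟨u, v⟩, h, he⟩
      rw [memB] at h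
      simp only [φ, Prod.mk.injEq] at he
      obtain ⟨rfl, rfl⟩ := he
      refine ⟨?_, by omega⟩
      convert h.1 using 1; ring
    · rintro ⟨h, h0⟩
      refine ⟨(V, N - U - V), (memB _ _).2 ⟨h, by omega⟩, ?_⟩
      simp only [φ, Prod.mk.injEq]; exact ⟨by ring, trivial⟩
  have memψ : ∀ U V, (U, V) ∈ ψ '' B ↔ auxBad a k (N - U - V) U ∧ 0 ≤ V := by
    intro U V
    constructor
    · rintro ⟨⟨u, v⟩, h, he⟩
      rw [memB] at h
      simp only [ψ, Prod.mk.injEq] at he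
      obtain ⟨rfl, rfl⟩ := he
      refine ⟨?_, by omega⟩
      convert h.1 using 1; ring
    · rintro ⟨h, h0⟩
      refine ⟨(N - U - V, U), (memB _ _).2 ⟨h, by omega⟩, ?_⟩
      simp only [ψ, Prod.mk.injEq]; exact ⟨trivial, by ring⟩
  have hDE : D = S ∪ (B ∪ (φ '' B ∪ ψ '' B)) := by
    ext ⟨U, V⟩
    rw [Set.mem_union, Set.mem_union, Set.mem_union, memB, memφ, memψ]
    simp only [hD, hS, Set.mem_ofPred_eq]
    constructor
    · rintro ⟨h0, h1, h2, h3⟩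
      by_cases b1 : auxBad a k U V
      · exact Or.inr (Or.inl ⟨b1, by omega⟩)
      by_cases b2 : auxBad a k V (N - U - V)
      · exact Or.inr (Or.inr (Or.inl ⟨b2, by omega⟩))
      by_cases b3 : auxBad a k (N - U - V) U
      · exact Or.inr (Or.inr (Or.inr ⟨b3, by omega⟩))
      exact Or.inl ⟨by omega, by omega, by omega, b1, b2, b3⟩
    · rintro (⟨h0, h1, h2, -⟩ | ⟨h, h0⟩ | ⟨h, h0⟩ | ⟨h, h0⟩)
      · omega
      · have := bad_imp _ _ h; omega
      · have := bad_imp _ _ h; omega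
      · have := bad_imp _ _ h; omega
  have d3 : Disjoint (φ '' B) (ψ '' B) := by
    rw [Set.disjoint_left]; rintro ⟨U, V⟩ h h'
    rw [memφ] at h; rw [memψ] at h'
    have := bad_imp _ _ h.1; have := bad_imp _ _ h'.1; omega
  have d2 : Disjoint B (φ '' B ∪ ψ '' B) := by
    rw [Set.disjoint_left]; rintro ⟨U, V⟩ h h'
    rw [Set.mem_union, memφ, memψ] at h'; rw [memB] at h
    have := bad_imp _ _ h.1
    rcases h' with h' | h' <;> have := bad_imp _ _ h'.1 <;> omega
  have d1 : Disjoint S (B ∪ (φ '' B ∪ ψ '' B)) := by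
    rw [Set.disjoint_left]; rintro ⟨U, V⟩ h h'
    rw [Set.mem_union, Set.mem_union, memφ, memψ, memB] at h'
    obtain ⟨-, -, -, n1, n2, n3⟩ := h
    rcases h' with h' | h' | h'
    · exact n1 h'.1
    · exact n2 h'.1
    · exact n3 h'.1
  have hSf : S.Finite := hDf.subset (by rw [hDE]; exact Set.subset_union_left)
  have hc : D.ncard = S.ncard + (B.ncard + (B.ncard + B.ncard)) := by
    rw [hDE, Set.ncard_union_eq d1 hSf (hBf.union ((hBf.image _).union (hBf.image _))),
      Set.ncard_union_eq d2 hBf ((hBf.image _).union (hBf.image _)),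
      Set.ncard_union_eq d3 (hBf.image _) (hBf.image _),
      Set.ncard_image_of_injective _ hφ, Set.ncard_image_of_injective _ hψ]
  rw [hc] at e1
  push_cast at e1
  have : 2 * (S.ncard : ℤ) = 2 * (N + 1) * (N + 1) - (N + 1) * (N + 1 - 1) -
    3 * (2 * k * ((a + 1) * k) - (a + 2) * (k * (k - 1)) + 2 * ((k + 1) / 2)) := by linarith
  rw [this, hN]; ring

/-- membership in the dilated triangle -/
lemma aux_mem (k r1 r2 r3 : ℝ) (hk : 0 < k) (h12 : r1 < r2) (h23 : r2 < r3) (x y : ℝ) :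
    (x, y) ∈ (fun p : ℝ × ℝ => k • p) '' (convexHull ℝ {(r1, r1^2), (r2, r2^2), (r3, r3^2)}) ↔
    0 ≤ y - (r2+r3)*x + k*(r2*r3) ∧ y - (r1+r3)*x + k*(r1*r3) ≤ 0 ∧
      0 ≤ y - (r1+r2)*x + k*(r1*r2) := by
  constructor
  · rintro ⟨⟨u, v⟩, hp, he⟩
    simp only [Prod.smul_mk, smul_eq_mul, Prod.mk.injEq] at he
    obtain ⟨rfl, rfl⟩ := he
    have hsub : convexHull ℝ {(r1, r1^2), (r2, r2^2), (r3, r3^2)} ⊆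
      {p : ℝ × ℝ | 0 ≤ p.2 - (r2+r3)*p.1 + (r2*r3) ∧ p.2 - (r1+r3)*p.1 + (r1*r3) ≤ 0 ∧
      0 ≤ p.2 - (r1+r2)*p.1 + (r1*r2)} := by
      apply convexHull_min
      · intro p hp
        simp only [Set.mem_insert_iff, Set.mem_singleton_iff] at hp
        rcases hp with rfl | rfl | rfl <;> refine ⟨?_, ?_, ?_⟩ <;> simp only <;>
          nlinarith [mul_pos (sub_pos.2 h12) (sub_pos.2 h23), mul_pos (sub_pos.2 h12) (sub_pos.2 (h12.trans h23)), mul_pos (sub_pos.2 h23) (sub_pos.2 (h12.trans h23))]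
      · rintro ⟨p1, p2⟩ ⟨ha, hb, hc⟩ ⟨q1, q2⟩ ⟨ha', hb', hc'⟩ s t hs ht hst
        simp only [Set.mem_ofPred_eq, Prod.smul_mk, Prod.mk_add_mk, smul_eq_mul] at *
        obtain rfl : t = 1 - s := by linarith
        refine ⟨?_, ?_, ?_⟩
        · nlinarith [mul_nonneg hs ha, mul_nonneg ht ha']
        · nlinarith [mul_nonneg hs (neg_nonneg.2 hb), mul_nonneg ht (neg_nonneg.2 hb')]
        · nlinarith [mul_nonneg hs hc, mul_nonneg ht hc']
    obtain ⟨ha, hb, hc⟩ := hsub hp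
    simp only at ha hb hc
    refine ⟨?_, ?_, ?_⟩
    · nlinarith [mul_nonneg hk.le ha]
    · nlinarith [mul_nonneg hk.le (neg_nonneg.2 hb)]
    · nlinarith [mul_nonneg hk.le hc]
  · rintro ⟨ha, hb, hc⟩
    have p12 := sub_pos.2 h12
    have p23 := sub_pos.2 h23
    have p13 := sub_pos.2 (h12.trans h23)
    have hconv := convex_convexHull ℝ ({(r1, r1^2), (r2, r2^2), (r3, r3^2)} : Set (ℝ × ℝ))
    let w : Fin 3 → ℝ := ![(y - (r2+r3)*x + k*(r2*r3))/(k*((r2-r1)*(r3-r1))),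
      (-(y - (r1+r3)*x + k*(r1*r3)))/(k*((r2-r1)*(r3-r2))),
      (y - (r1+r2)*x + k*(r1*r2))/(k*((r3-r1)*(r3-r2)))]
    let z : Fin 3 → ℝ × ℝ := ![(r1, r1^2), (r2, r2^2), (r3, r3^2)]
    have hm := hconv.sum_mem (t := Finset.univ) (w := w) (z := z) (by
      intro i _
      fin_cases i
      · exact div_nonneg ha (by positivity)
      · exact div_nonneg (by linarith) (by positivity)
      · exact div_nonneg hc (by positivity)) (by
      simp only [Fin.sum_univ_three, w, Matrix.cons_val]
      field_simp
      ring) (by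
      intro i _
      apply subset_convexHull
      fin_cases i <;> simp [z])
    refine ⟨_, hm, ?_⟩
    simp only [Fin.sum_univ_three, w, z, Matrix.cons_val, Prod.smul_mk, Prod.mk_add_mk, smul_eq_mul,
      Prod.mk.injEq]
    constructor
    · field_simp
      ring
    · field_simp
      ring

lemma aux_roots (a r1 r2 r3 : ℝ) (ha : 1 ≤ a) (h12 : r1 < r2) (h23 : r2 < r3)
    (h1 : r1^3 - a*r1^2 - (a+3)*r1 - 1 = 0)
    (h2 : r2^3 - a*r2^2 - (a+3)*r2 - 1 = 0)
    (h3 : r3^3 - a*r3^2 - (a+3)*r3 - 1 = 0) :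
    a + 1 < r3 ∧ r1 = -1 - 1/r3 ∧ r2 = -1/(1+r3) ∧ r1 + r2 + r3 = a := by
  have q12 : r1^2 + r1*r2 + r2^2 - a*(r1+r2) - (a+3) = 0 := by
    apply mul_left_cancel₀ (sub_ne_zero.2 h12.ne); linear_combination h1 - h2
  have q23 : r2^2 + r2*r3 + r3^2 - a*(r2+r3) - (a+3) = 0 := by
    apply mul_left_cancel₀ (sub_ne_zero.2 h23.ne); linear_combination h2 - h3
  have hs : r1 + r2 + r3 = a := by
    apply mul_left_cancel₀ (sub_ne_zero.2 (h12.trans h23).ne); linear_combination q12 - q23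
  have hr : 0 < r3 := by linarith
  have e2 : r1*r2 + r2*r3 + r1*r3 = -(a+3) := by
    linear_combination -q12 + (r1 + r2) * hs
  have e3 : r1*r2*r3 = 1 := by
    linear_combination h3 - r3^2*hs + r3 * e2
  have fac : ∀ x, x^3 - a*x^2 - (a+3)*x - 1 = (x-r1)*(x-r2)*(x-r3) := by
    intro x; linear_combination x^2*hs - x*e2 + e3
  have hs1 : r3 * (r3^2 - a*r3 - (a+3)) = 1 := by linarith
  have hgt : a + 1 < r3 := by
    by_contra hle
    push Not at hle
    nlinarith [mul_nonneg hr.le (sub_nonneg.2 hle)]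
  have f1 : (-1 - 1/r3)^3 - a*(-1-1/r3)^2 - (a+3)*(-1-1/r3) - 1 = 0 := by
    field_simp; linear_combination h3
  have f2 : (-1/(1+r3))^3 - a*(-1/(1+r3))^2 - (a+3)*(-1/(1+r3)) - 1 = 0 := by
    field_simp; linear_combination -h3
  rw [fac] at f1 f2
  have i1 : 0 < 1/r3 := by positivity
  have i2 : 0 < 1/(1+r3) := by positivity
  have i3 : 1/(1+r3) < 1 := by rw [div_lt_one (by positivity)]; linarith
  have i4 : -1/(1+r3) = -(1/(1+r3)) := by ring
  rw [i4] at f2 ⊢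
  have g1 : -1 - 1/r3 = r1 ∨ -1 - 1/r3 = r2 := by
    rcases mul_eq_zero.1 f1 with h | h
    · rcases mul_eq_zero.1 h with h | h
      · left; linarith
      · right; linarith
    · linarith
  have g2 : -(1/(1+r3)) = r1 ∨ -(1/(1+r3)) = r2 := by
    rcases mul_eq_zero.1 f2 with h | h
    · rcases mul_eq_zero.1 h with h | h
      · left; linarith
      · right; linarith
    · linarith
  refine ⟨hgt, ?_, ?_, hs⟩
  · rcases g1 with g | g
    · exact g.symm
    · rcases g2 with g' | g' <;> linarith
  · rcases g2 with g | g
    · rcases g1 with g' | g' <;> linarith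
    · exact g.symm

/-- rounding -/
lemma aux_round (a k U V : ℤ) (r : ℝ) (ha : 1 ≤ a) (hk1 : 1 ≤ k) (hka : k ≤ a)
    (hr : (a:ℝ) + 1 < r) (hre : r = a + 1 + 1/r + 1/(1+r)) (hV : 0 ≤ V) (hVk : V < k) :
    (U : ℝ) ≤ r * V + 2*k - k*(1/(1+r)) ↔ U ≤ (a+1)*V + 2*k - auxE k V := by
  have haR : (1:ℝ) ≤ a := by exact_mod_cast ha
  have hkR : (1:ℝ) ≤ k := by exact_mod_cast hk1
  have hkaR : (k:ℝ) ≤ a := by exact_mod_cast hka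
  have hVR : (0:ℝ) ≤ V := by exact_mod_cast hV
  have hVkR : (V:ℝ) + 1 ≤ k := by exact_mod_cast hVk
  have hr0 : 0 < r := by linarith
  set d := 1/r with hd
  set t := 1/(1+r) with ht
  have hd0 : 0 < d := by positivity
  have ht0 : 0 < t := by positivity
  have hdr : d * r = 1 := by rw [hd]; field_simp
  have htr : t * (1 + r) = 1 := by rw [ht]; field_simp
  have htd : d = t * (1 + d) := by rw [hd, ht]; field_simp; ring
  have hkd : (k:ℝ) * d < 1 := by nlinarith
  have hkt : (k:ℝ) * t < 1 := by nlinarith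
  have hVd : (V:ℝ) * d < 1 := by nlinarith
  have hVd0 : 0 ≤ (V:ℝ) * d := by positivity
  have expand : r * V + 2*k - k*t = ((a+1)*V + 2*k : ℝ) + t*(2*V + V*d - k) := by
    have : r * V = (a+1)*V + d * V + t * V := by
      conv_lhs => rw [hre]
      ring
    rw [this]; nth_rewrite 1 [htd]; ring
  rw [expand]
  unfold auxE
  split_ifs with h
  · have hR : (2*V + 1 : ℝ) ≤ k := by exact_mod_cast h
    have n1 : t*(2*V + V*d - k) < 0 := by
      apply mul_neg_of_pos_of_neg ht0; linarith
    have n2 : -1 < t*(2*V + V*d - k) := by nlinarith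
    constructor
    · intro hU
      have : (U:ℝ) < (((a+1)*V + 2*k : ℤ) : ℝ) := by push_cast; linarith
      have := Int.cast_lt.1 this
      omega
    · intro hU
      have : (U:ℝ) ≤ (((a+1)*V + 2*k - 1 : ℤ) : ℝ) := by exact_mod_cast hU
      push_cast at this; linarith
  · have hR : (k : ℝ) ≤ 2*V := by exact_mod_cast (not_lt.1 h)
    have n1 : 0 ≤ t*(2*V + V*d - k) := by
      apply mul_nonneg ht0.le; linarith
    have n2 : t*(2*V + V*d - k) < 1 := by
      have : t*(2*V + V*d - k) ≤ t * (V * (1 + d)) := by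
        apply mul_le_mul_of_nonneg_left _ ht0.le; linarith
      have h2 : t * (V * (1 + d)) = V * d := by rw [htd]; ring_nf; nlinarith
      linarith
    constructor
    · intro hU
      have : (U:ℝ) < (((a+1)*V + 2*k + 1 : ℤ) : ℝ) := by push_cast; linarith
      have := Int.cast_lt.1 this
      omega
    · intro hU
      have : (U:ℝ) ≤ (((a+1)*V + 2*k - 0 : ℤ) : ℝ) := by exact_mod_cast hU
      push_cast at this; linarith

lemma aux_pos (a k r U V W : ℝ) (hk1 : 1 ≤ k) (hka : k ≤ a)
    (hr : a + 1 < r) (hre : r = a + 1 + 1/r + 1/(1+r)) (hsum : U + V + W = (a+3)*k)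
    (c1 : U ≤ r * V + 2*k - k*(1/(1+r))) (c3 : W ≤ r * U + 2*k - k*(1/(1+r))) : -1 < V := by
  have hr0 : 0 < r := by linarith
  obtain rfl : W = (a+3)*k - U - V := by linarith
  have ha : a = r - 1 - 1/r - 1/(1+r) := by linarith
  have key : -(k * (1/r)) * (r^2+r+1) ≤ (r^2+r+1) * V := by
    have h := mul_le_mul_of_nonneg_left c1 (by linarith : 0 ≤ r + 1)
    have e : -(k * (1/r)) * (r^2+r+1) = (a+3)*k - 2*k + k*(1/(1+r)) - (r+1)*(2*k - k*(1/(1+r))) := by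
      rw [ha]; field_simp; ring
    rw [e]; nlinarith
  have : -(k*(1/r)) ≤ V := by
    have hp : 0 < r^2+r+1 := by positivity
    nlinarith
  have : k*(1/r) < 1 := by
    rw [mul_one_div, div_lt_one hr0]; linarith
  linarith

theorem simplest_cubic_lattice_point_count (a k : ℤ) (ha : 1 ≤ a)
    (hk1 : 1 ≤ k) (hka : k ≤ a) (ρ₁ ρ₂ ρ₃ : ℝ)
    (h12 : ρ₁ < ρ₂) (h23 : ρ₂ < ρ₃)
    (h1 : ρ₁^3 - a*ρ₁^2 - (a+3)*ρ₁ - 1 = 0)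
    (h2 : ρ₂^3 - a*ρ₂^2 - (a+3)*ρ₂ - 1 = 0)
    (h3 : ρ₃^3 - a*ρ₃^2 - (a+3)*ρ₃ - 1 = 0)
    (T : Set (ℝ × ℝ))
    (hT : T = convexHull ℝ {(ρ₁, ρ₁^2), (ρ₂, ρ₂^2), (ρ₃, ρ₃^2)}) :
    (Set.ncard {p : ℤ × ℤ | ((p.1 : ℝ), (p.2 : ℝ)) ∈ (fun x => (k : ℝ) • x) '' T} : ℝ) =
      k^2 * (a^2 + 3*a + 9) / 2 + (if Even k then 1 else -1/2) := by
  have haR : (1:ℝ) ≤ a := by exact_mod_cast ha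
  have hkR : (1:ℝ) ≤ k := by exact_mod_cast hk1
  have hkaR : (k:ℝ) ≤ a := by exact_mod_cast hka
  obtain ⟨hr, e1, e2, hs⟩ := aux_roots a ρ₁ ρ₂ ρ₃ haR h12 h23 h1 h2 h3
  have hr0 : 0 < ρ₃ := by linarith
  have hre : ρ₃ = a + 1 + 1/ρ₃ + 1/(1+ρ₃) := by
    have : -1/(1+ρ₃) = -(1/(1+ρ₃)) := by ring
    rw [this] at e2; linarith
  have hcount := aux_count a k hk1 hka
  set S := {p : ℤ × ℤ | 0 ≤ p.1 ∧ 0 ≤ p.2 ∧ p.1 + p.2 ≤ (a+3)*k ∧ ¬ auxBad a k p.1 p.2 ∧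
      ¬ auxBad a k p.2 ((a+3)*k - p.1 - p.2) ∧ ¬ auxBad a k ((a+3)*k - p.1 - p.2) p.1} with hS
  let φ : ℤ × ℤ → ℤ × ℤ := fun p => (p.1 + k, p.2 - (a+1)*p.1 - k)
  have hφ : Function.Bijective φ := by
    constructor
    · rintro ⟨u, v⟩ ⟨u', v'⟩ h
      simp only [φ, Prod.mk.injEq] at h ⊢
      obtain ⟨h1, h2⟩ := h
      obtain rfl : u = u' := by omega
      exact ⟨rfl, by linarith⟩
    · rintro ⟨u, v⟩
      refine ⟨(u - k, v + (a+1)*(u-k) + k), ?_⟩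
      simp only [φ, Prod.mk.injEq]; constructor <;> ring
  -- one-constraint equivalence
  have hC : ∀ U V W : ℤ, U + V + W = (a+3)*k → 0 ≤ V → 0 ≤ W →
      ((U : ℝ) ≤ ρ₃ * V + 2*k - k*(1/(1+ρ₃)) ↔ ¬ auxBad a k U V) := by
    intro U V W hsum hV hW
    by_cases hVk : V < k
    · rw [aux_round a k U V ρ₃ ha hk1 hka hr hre hV hVk]
      unfold auxBad
      constructor
      · rintro h ⟨_, _, h'⟩; omega
      · intro h; by_contra h'; exact h ⟨hV, hVk, by omega⟩
    · have hb : ¬ auxBad a k U V := fun h => hVk h.2.1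
      simp only [hb, not_false_iff, iff_true]
      have hVR : (k:ℝ) ≤ V := by exact_mod_cast (not_lt.1 hVk)
      have hWR : (0:ℝ) ≤ W := by exact_mod_cast hW
      have hsR : (U:ℝ) + V + W = (a+3)*k := by exact_mod_cast hsum
      have ht1 : 1/(1+ρ₃) < 1 := by rw [div_lt_one (by positivity)]; linarith
      have ht2 : (k:ℝ) * (1/(1+ρ₃)) ≤ k := by nlinarith
      nlinarith
  have hset : {p : ℤ × ℤ | ((p.1 : ℝ), (p.2 : ℝ)) ∈ (fun x => (k : ℝ) • x) '' T} = φ ⁻¹' S := by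
    ext ⟨x, y⟩
    rw [Set.mem_ofPred_eq, hT, aux_mem k ρ₁ ρ₂ ρ₃ (by linarith) h12 h23, Set.mem_preimage]
    obtain ⟨U, hU⟩ : ∃ U : ℤ, U = x + k := ⟨_, rfl⟩
    obtain ⟨V, hV⟩ : ∃ V : ℤ, V = y - (a+1)*x - k := ⟨_, rfl⟩
    obtain ⟨W, hW⟩ : ∃ W : ℤ, W = (a+3)*k - U - V := ⟨_, rfl⟩
    have hφe : φ (x, y) = (U, V) := by simp only [φ, hU, hV]
    rw [hφe, hS]
    simp only [Set.mem_ofPred_eq]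
    rw [← hW]
    have hsum : U + V + W = (a+3)*k := by omega
    have hsR : (U:ℝ) + V + W = (a+3)*k := by exact_mod_cast hsum
    have hUR : (U:ℝ) = x + k := by rw [hU]; push_cast; ring
    have hVR : (V:ℝ) = y - (a+1)*x - k := by rw [hV]; push_cast; ring
    have hWR : (W:ℝ) = (a+3)*k - U - V := by rw [hW]; push_cast; ring
    have haE : (a:ℝ) = ρ₃ - 1 - 1/ρ₃ - 1/(1+ρ₃) := by linarith
    have m1 : (0 ≤ (y:ℝ) - (ρ₂+ρ₃)*x + k*(ρ₂*ρ₃)) ↔ (U : ℝ) ≤ ρ₃ * V + 2*k - k*(1/(1+ρ₃)) := by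
      have : ρ₃ * V + 2*k - k*(1/(1+ρ₃)) - U = ρ₃ * ((y:ℝ) - (ρ₂+ρ₃)*x + k*(ρ₂*ρ₃)) := by
        rw [hUR, hVR, e2, haE]; field_simp; ring
      rw [← sub_nonneg (b := (U:ℝ)), this]
      exact (mul_nonneg_iff_of_pos_left hr0).symm
    have m2 : ((y:ℝ) - (ρ₁+ρ₃)*x + k*(ρ₁*ρ₃) ≤ 0) ↔ (V : ℝ) ≤ ρ₃ * W + 2*k - k*(1/(1+ρ₃)) := by
      have : ρ₃ * W + 2*k - k*(1/(1+ρ₃)) - V = (1+ρ₃) * (-((y:ℝ) - (ρ₁+ρ₃)*x + k*(ρ₁*ρ₃))) := by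
        rw [hWR, hUR, hVR, e1, haE]; field_simp; ring
      rw [← sub_nonneg (b := (V:ℝ)), this, mul_nonneg_iff_of_pos_left (by positivity), neg_nonneg]
    have m3 : (0 ≤ (y:ℝ) - (ρ₁+ρ₂)*x + k*(ρ₁*ρ₂)) ↔ (W : ℝ) ≤ ρ₃ * U + 2*k - k*(1/(1+ρ₃)) := by
      have : ρ₃ * U + 2*k - k*(1/(1+ρ₃)) - W = ((y:ℝ) - (ρ₁+ρ₂)*x + k*(ρ₁*ρ₂)) := by
        rw [hWR, hUR, hVR, e1, e2, haE]; field_simp; ring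
      rw [← sub_nonneg (b := (W:ℝ)), this]
    rw [m1, m2, m3]
    constructor
    · rintro ⟨c1, c2, c3⟩
      have pV := aux_pos a k ρ₃ U V W hkR hkaR hr hre hsR c1 c3
      have pW := aux_pos a k ρ₃ V W U hkR hkaR hr hre (by linarith) c2 c1
      have pU := aux_pos a k ρ₃ W U V hkR hkaR hr hre (by linarith) c3 c2
      have pV' : -1 < V := by exact_mod_cast pV
      have pU' : -1 < U := by exact_mod_cast pU
      have pW' : -1 < W := by exact_mod_cast pW
      exact ⟨by omega, by omega, by omega, (hC U V W hsum (by omega) (by omega)).1 c1,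
        (hC V W U (by omega) (by omega) (by omega)).1 c2,
        (hC W U V (by omega) (by omega) (by omega)).1 c3⟩
    · rintro ⟨g1, g2, g3, b1, b2, b3⟩
      exact ⟨(hC U V W hsum (by omega) (by omega)).2 b1,
        (hC V W U (by omega) (by omega) (by omega)).2 b2,
        (hC W U V (by omega) (by omega) (by omega)).2 b3⟩
  rw [hset, Set.ncard_preimage_of_injective_subset_range hφ.1 (by rw [hφ.2.range_eq]; exact Set.subset_univ _)]
  split_ifs with hev
  · obtain ⟨m, hm⟩ := hev
    have : 6 * ((k+1)/2) = 3 * k := by omega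
    rw [this] at hcount
    have hR : 2 * (S.ncard : ℝ) = k^2*(a^2+3*a+9) + 3*k + 2 - 3*k := by exact_mod_cast hcount
    linarith
  · obtain ⟨m, hm⟩ := Int.not_even_iff_odd.1 hev
    have : 6 * ((k+1)/2) = 3 * k + 3 := by omega
    rw [this] at hcount
    have hR : 2 * (S.ncard : ℝ) = k^2*(a^2+3*a+9) + 3*k + 2 - (3*k + 3) := by exact_mod_cast hcount
    linarith
end

section
/- Let a ≥ 1 and 1 ≤ k ≤ a be integers. The number of quadratic polynomials g(x) = kx² + n₁x + n₂ with n₁, n₂ ∈ ℤ that interlace f_a (i.e., the two real roots of g lie in the closed intervals determined by consecutive roots of f_a, equivalently the point (−n₁/k, n₂/k appropriately normalized) lies in the dilated cyclic polytope) equals k²(a²+3a+9)/2 + 1 if k is even and k²(a²+3a+9)/2 − 1/2 if k is odd. -/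
theorem sc_irr_rat (a : ℤ) (x : ℚ) (hx : x^3 - a*x^2 - (a+3)*x - 1 = 0) : False := by
  have hd : (x.den : ℚ) ≠ 0 := by exact_mod_cast x.den_nz
  have hxe : x * x.den = x.num := Rat.mul_den_eq_num x
  have h : (x.num : ℚ)^3 - a * x.num^2 * x.den - (a+3) * x.num * x.den^2 - x.den^3 = 0 := by
    rw [← hxe]
    linear_combination (x.den : ℚ)^3 * hx
  have hz : x.num^3 - a * x.num^2 * (x.den : ℤ) - (a+3) * x.num * (x.den : ℤ)^2 - (x.den : ℤ)^3 = 0 := by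
    exact_mod_cast h
  have hc := x.reduced
  have hev : Even (x.num^3 - a * x.num^2 * (x.den : ℤ) - (a+3) * x.num * (x.den : ℤ)^2 - (x.den : ℤ)^3) := by
    rw [hz]; exact Even.zero
  by_cases h1 : Even x.num
  · by_cases h2 : Even (x.den : ℤ)
    · have h3 : 2 ∣ x.num.natAbs := by
        have := h1.two_dvd
        omega
      have h4 : 2 ∣ x.den := by
        have := h2.two_dvd
        omega
      have := Nat.dvd_gcd h3 h4
      rw [Nat.Coprime] at hc
      rw [hc] at this
      omega
    · simp [Int.even_sub, Int.even_pow, h1, h2, parity_simps] at hev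
  · have h3 : ¬ Even (3:ℤ) := by decide
    by_cases ha : Even a <;> by_cases h2 : Even (x.den : ℤ) <;>
    simp [Int.even_sub, Int.even_mul, Int.even_add, Int.even_pow, h1, h2, h3, ha] at hev

theorem sc_no_quad (a k n₁ n₂ : ℤ) (hk : 1 ≤ k) (r : ℝ) (hr : r^3 - a*r^2 - (a+3)*r - 1 = 0)
    (hg : (k:ℝ)*r^2 + n₁*r + n₂ = 0) : False := by
  -- k^2 f = g (k x + c) + (r1 x + r0), c = -a k - n1
  have hk' : (k:ℝ) ≠ 0 := by exact_mod_cast (by omega : k ≠ 0)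
  have hkq : (k:ℚ) ≠ 0 := by exact_mod_cast (by omega : k ≠ 0)
  obtain ⟨c, hc⟩ : ∃ c : ℤ, c = -a*k - n₁ := ⟨_, rfl⟩
  obtain ⟨r1, hr1⟩ : ∃ c' : ℤ, c' = -k^2*(a+3) - n₁*c - k*n₂ := ⟨_, rfl⟩
  obtain ⟨r0, hr0⟩ : ∃ c' : ℤ, c' = -k^2 - n₂*c := ⟨_, rfl⟩
  have hlin : (r1:ℝ)*r + r0 = 0 := by
    rw [hr1, hr0, hc]; push_cast
    linear_combination (k:ℝ)^2 * hr - (k*r + (-a*k - n₁)) * hg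
  by_cases h0 : r1 = 0
  · have h00 : r0 = 0 := by
      rw [h0] at hlin; simpa using hlin
    apply sc_irr_rat a (-c/k)
    have e1 : -(k:ℚ)^2*(a+3) - n₁*c - k*n₂ = 0 := by exact_mod_cast (hr1.symm.trans h0)
    have e0 : -(k:ℚ)^2 - n₂*c = 0 := by exact_mod_cast (hr0.symm.trans h00)
    have ec : (c:ℚ) = -a*k - n₁ := by exact_mod_cast hc
    field_simp
    have en : (n₁:ℚ) = -a*k - c := by linarith
    rw [en] at e1
    linear_combination (-c) * e1 + k * e0 
  · have hq : r = ((-r0/r1 : ℚ) : ℝ) := by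
      have : (r1:ℝ) ≠ 0 := by exact_mod_cast h0
      push_cast
      field_simp
      linarith
    rw [hq] at hr
    exact sc_irr_rat a (-r0/r1) (by exact_mod_cast hr)

theorem sc_sign (a k n₁ n₂ : ℤ) (hk : 1 ≤ k) (ρ₁ ρ₂ ρ₃ : ℝ)
    (h12 : ρ₁ < ρ₂) (h23 : ρ₂ < ρ₃) 
    (h2 : ρ₂^3 - a*ρ₂^2 - (a+3)*ρ₂ - 1 = 0) :
    (∃ β₁ β₂ : ℝ, β₁ ≤ β₂ ∧
        (k : ℝ)*β₁^2 + n₁*β₁ + n₂ = 0 ∧ (k : ℝ)*β₂^2 + n₁*β₂ + n₂ = 0 ∧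
        ρ₁ ≤ β₁ ∧ β₁ ≤ ρ₂ ∧ ρ₂ ≤ β₂ ∧ β₂ ≤ ρ₃) ↔
    (0 ≤ (k : ℝ)*ρ₁^2 + n₁*ρ₁ + n₂ ∧ (k : ℝ)*ρ₂^2 + n₁*ρ₂ + n₂ ≤ 0 ∧
      0 ≤ (k : ℝ)*ρ₃^2 + n₁*ρ₃ + n₂) := by
  have hk0 : (0:ℝ) < k := by exact_mod_cast hk
  constructor
  · rintro ⟨b, c, hbc, hb, hc, i1, i2, i3, i4⟩
    rcases hbc.eq_or_lt with h | h
    · exfalso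
      have : b = ρ₂ := le_antisymm i2 (h ▸ i3)
      rw [this] at hb
      exact sc_no_quad a k n₁ n₂ hk ρ₂ h2 hb
    · have hn1 : (n₁:ℝ) = -k*(b+c) := by
        have : (b - c) * (k*(b+c) + n₁) = 0 := by linear_combination hb - hc
        rcases mul_eq_zero.1 this with h' | h' <;> linarith
      have hn2 : (n₂:ℝ) = k*b*c := by
        rw [hn1] at hb; linarith
      have key : ∀ x : ℝ, (k : ℝ)*x^2 + n₁*x + n₂ = k*((x-b)*(x-c)) := by
        intro x; rw [hn1, hn2]; ring
      rw [key, key, key]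
      refine ⟨mul_nonneg hk0.le (mul_nonneg_of_nonpos_of_nonpos (by linarith) (by linarith)), mul_nonpos_of_nonneg_of_nonpos hk0.le (mul_nonpos_of_nonneg_of_nonpos (by linarith) (by linarith)), mul_nonneg hk0.le (mul_nonneg (by linarith) (by linarith))⟩
  · rintro ⟨g1, g2, g3⟩
    have hcont : Continuous (fun x : ℝ => (k : ℝ)*x^2 + n₁*x + n₂) := by fun_prop
    obtain ⟨b, ⟨b1, b2⟩, hb⟩ := intermediate_value_Icc' h12.le hcont.continuousOn ⟨g2, g1⟩
    obtain ⟨c, ⟨c1, c2⟩, hc⟩ := intermediate_value_Icc h23.le hcont.continuousOn ⟨g2, g3⟩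
    exact ⟨b, c, b2.trans c1, hb, hc, b1, b2, c1, c2⟩

theorem sc_roots (a : ℤ) (ha : 1 ≤ a) (ρ₁ ρ₂ ρ₃ : ℝ)
    (h12 : ρ₁ < ρ₂) (h23 : ρ₂ < ρ₃)
    (h1 : ρ₁^3 - a*ρ₁^2 - (a+3)*ρ₁ - 1 = 0)
    (h2 : ρ₂^3 - a*ρ₂^2 - (a+3)*ρ₂ - 1 = 0)
    (h3 : ρ₃^3 - a*ρ₃^2 - (a+3)*ρ₃ - 1 = 0) :
    (a:ℝ) + 1 < ρ₃ ∧ ρ₂ * (1 + ρ₃) = -1 ∧ ρ₁ * ρ₃ = -(1+ρ₃) := by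
  have ha' : (1:ℝ) ≤ a := by exact_mod_cast ha
  have s12 : ρ₁^2 + ρ₁*ρ₂ + ρ₂^2 - a*(ρ₁+ρ₂) - (a+3) = 0 := by
    have : (ρ₁ - ρ₂) * (ρ₁^2 + ρ₁*ρ₂ + ρ₂^2 - a*(ρ₁+ρ₂) - (a+3)) = 0 := by linear_combination h1 - h2
    rcases mul_eq_zero.1 this with h | h
    · linarith
    · exact h
  have s23 : ρ₃^2 + ρ₃*ρ₂ + ρ₂^2 - a*(ρ₃+ρ₂) - (a+3) = 0 := by
    have : (ρ₃ - ρ₂) * (ρ₃^2 + ρ₃*ρ₂ + ρ₂^2 - a*(ρ₃+ρ₂) - (a+3)) = 0 := by linear_combination h3 - h2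
    rcases mul_eq_zero.1 this with h | h
    · linarith
    · exact h
  have hs : ρ₁ + ρ₂ + ρ₃ = a := by
    have : (ρ₃ - ρ₁) * (ρ₁ + ρ₂ + ρ₃ - a) = 0 := by linear_combination s23 - s12
    rcases mul_eq_zero.1 this with h | h <;> linarith
  have hp : ρ₁*ρ₂ + ρ₁*ρ₃ + ρ₂*ρ₃ = -(a+3) := by
    have : ρ₁ = a - ρ₂ - ρ₃ := by linarith
    rw [this]; linear_combination -s23
  have hq : ρ₁*ρ₂*ρ₃ = 1 := by
    linear_combination h3 - ρ₃^2 * hs + ρ₃ * hp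
  have fac : ∀ x : ℝ, (x-ρ₁)*(x-ρ₂)*(x-ρ₃) = x^3 - a*x^2 - (a+3)*x - 1 := by
    intro x
    linear_combination (-x^2) * hs + x * hp - hq
  have hb : (a:ℝ) + 1 < ρ₃ := by
    by_contra hcon
    push Not at hcon
    have := fac (a+1)
    have h5 : 0 ≤ ((a:ℝ)+1-ρ₁)*(a+1-ρ₂)*(a+1-ρ₃) :=
      mul_nonneg (mul_nonneg (by linarith) (by linarith)) (by linarith)
    nlinarith
  have h0 : 0 < ρ₃ := by linarith
  have e1 : (-1/(1+ρ₃) - ρ₁) * (-1/(1+ρ₃) - ρ₂) = 0 := by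
    have := fac (-1/(1+ρ₃))
    have h6 : (-1/(1+ρ₃))^3 - a*(-1/(1+ρ₃))^2 - (a+3)*(-1/(1+ρ₃)) - 1 = 0 := by
      field_simp
      linear_combination -h3
    rw [h6] at this
    rcases mul_eq_zero.1 this with h | h
    · exact h
    · have : -1/(1+ρ₃) < 0 := div_neg_of_neg_of_pos (by norm_num) (by linarith)
      linarith
  have hprod : ρ₁ * ρ₂ * ρ₃ = 1 := hq
  have hmul : (1 + ρ₃) ≠ 0 := by linarith
  rcases mul_eq_zero.1 e1 with h | h
  · exfalso
    have e : ρ₁ * (1 + ρ₃) = -1 := by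
      have : ρ₁ = -1/(1+ρ₃) := by linarith
      rw [this]; field_simp
    have : ρ₂ * ρ₃ = -(1+ρ₃) := by linear_combination (-(1+ρ₃)) * hq + ρ₂*ρ₃ * e
    nlinarith
  · have e : ρ₂ * (1 + ρ₃) = -1 := by
      have : ρ₂ = -1/(1+ρ₃) := by linarith
      rw [this]; field_simp
    exact ⟨hb, e, by linear_combination (-(1+ρ₃)) * hq + ρ₁*ρ₃ * e⟩

def scI (a k x y : ℤ) : Prop :=
  k ≤ x ∨ k*(a+1) - (a+2)*x + (if 2*x < k then 1 else 0) ≤ y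

def scR (a k : ℤ) (ρ : ℝ) (x y : ℤ) : Prop :=
  (k:ℝ) ≤ (1+ρ)*(y - k*(a+1)) + (1+ρ)^2 * x

theorem scR_iff (a k : ℤ) (ha : 1 ≤ a) (hk : 1 ≤ k) (hka : k ≤ a) (ρ : ℝ) (hρ : (a:ℝ) + 1 < ρ)
    (hf : ρ^3 - a*ρ^2 - (a+3)*ρ - 1 = 0) (x y : ℤ) (hx : 0 ≤ x) (hy : 0 ≤ y) :
    scR a k ρ x y ↔ scI a k x y := by
  have ha' : (1:ℝ) ≤ a := by exact_mod_cast ha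
  have hk' : (1:ℝ) ≤ k := by exact_mod_cast hk
  have hka' : (k:ℝ) ≤ a := by exact_mod_cast hka
  have hx' : (0:ℝ) ≤ x := by exact_mod_cast hx
  have hρ0 : 0 < ρ := by linarith
  obtain ⟨w, hw⟩ : ∃ w, w = 1/ρ := ⟨_, rfl⟩
  have hw1 : w * ρ = 1 := by rw [hw]; field_simp
  have hw0 : 0 < w := by rw [hw]; positivity
  have hsq : (1+ρ)^2 = (a+2)*(1+ρ) + 2 + w := by
    have : ρ * ((1+ρ)^2 - ((a+2)*(1+ρ) + 2 + w)) = 0 := by linear_combination hf - hw1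
    rcases mul_eq_zero.1 this with h | h <;> linarith
  obtain ⟨e, he⟩ : ∃ e : ℤ, e = y + (a+2)*x - k*(a+1) := ⟨_, rfl⟩
  have he' : (e:ℝ) = y + (a+2)*x - k*(a+1) := by exact_mod_cast he
  have hR : scR a k ρ x y ↔ (k:ℝ) - (2+w)*x ≤ (1+ρ)*e := by
    unfold scR
    rw [hsq, he']
    constructor <;> intro h <;> nlinarith
  rw [hR]
  unfold scI
  by_cases hxk : k ≤ x
  · have : (k:ℝ) ≤ x := by exact_mod_cast hxk
    have he0 : (0:ℤ) ≤ e := by rw [he]; nlinarith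
    have he0' : (0:ℝ) ≤ e := by exact_mod_cast he0
    simp only [hxk, true_or, iff_true]
    have := mul_nonneg (by linarith : 0 ≤ 1+ρ) he0'
    nlinarith
  · simp only [hxk, false_or]
    push Not at hxk
    have hxk' : (x:ℝ) + 1 ≤ k := by exact_mod_cast hxk
    have hwx : w * x < 1 := by nlinarith
    have hwx0 : 0 ≤ w * x := by positivity
    split_ifs with h2
    · have h2' : 2*(x:ℝ) + 1 ≤ k := by exact_mod_cast h2
      constructor
      · intro h
        have : (0:ℝ) < e := by
          by_contra hc
          push Not at hc
          nlinarith
        have : 0 < e := by exact_mod_cast this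
        linarith
      · intro h
        have : 1 ≤ e := by linarith
        have : (1:ℝ) ≤ e := by exact_mod_cast this
        nlinarith
    · have h2' : (k:ℝ) ≤ 2*(x:ℝ) := by push Not at h2; exact_mod_cast h2
      constructor
      · intro h
        have : (-1:ℝ) < e := by
          by_contra hc
          push Not at hc
          nlinarith
        have : -1 < e := by exact_mod_cast this
        linarith
      · intro h
        have : 0 ≤ e := by linarith
        have : (0:ℝ) ≤ e := by exact_mod_cast this
        nlinarith

theorem scR_nonneg (a k : ℤ) (ha : 1 ≤ a) (hk : 1 ≤ k) (hka : k ≤ a) (ρ : ℝ) (hρ : (a:ℝ) + 1 < ρ)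
    (x y z : ℤ) (hs : x + y + z = k*(a+3))
    (h0 : scR a k ρ x z) (h1 : scR a k ρ y x) : 0 ≤ x := by
  have ha' : (1:ℝ) ≤ a := by exact_mod_cast ha
  have hk' : (1:ℝ) ≤ k := by exact_mod_cast hk
  have hka' : (k:ℝ) ≤ a := by exact_mod_cast hka
  have hs' : (x:ℝ) + y + z = k*(a+3) := by exact_mod_cast hs
  by_contra hx
  have hx1 : (x:ℝ) ≤ -1 := by
    have : x ≤ -1 := by omega
    exact_mod_cast this
  unfold scR at h0 h1
  obtain ⟨r, hr⟩ : ∃ r, r = 1 + ρ := ⟨_, rfl⟩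
  rw [← hr] at h0 h1
  have hr0 : 0 < r := by linarith
  have hz : (z:ℝ) = k*(a+3) - x - y := by linarith
  rw [hz] at h0
  -- r*h0 + h1
  have h2 : (k:ℝ)*r + k ≤ r*(r*(2*k-x-y) + r^2*x) + (r*(x-k*(a+1)) + r^2*y) := by
    have := mul_le_mul_of_nonneg_left h0 hr0.le
    nlinarith
  have h3 : r * (x*(r^2 - r + 1) + k*(2*r - a - 2)) ≥ k := by nlinarith
  have h4 : x*(r^2 - r + 1) + k*(2*r - a - 2) ≤ 0 := by
    have e0 : 0 ≤ r^2 - r + 1 := by nlinarith [sq_nonneg (r - 1)]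
    have e1 : x*(r^2 - r + 1) ≤ -(r^2-r+1) := by
      have := mul_le_mul_of_nonneg_right hx1 e0
      linarith
    have e2 : k*(2*r - a - 2) ≤ a*(2*r-a-2) := by
      apply mul_le_mul_of_nonneg_right hka'; linarith
    nlinarith [sq_nonneg (r - 1 - a)]
  nlinarith

theorem sc_mem_iff (a k n₁ n₂ : ℤ) (ha : 1 ≤ a) (hk1 : 1 ≤ k) (hka : k ≤ a) (ρ₁ ρ₂ ρ₃ : ℝ)
    (h12 : ρ₁ < ρ₂) (h23 : ρ₂ < ρ₃)
    (h1 : ρ₁^3 - a*ρ₁^2 - (a+3)*ρ₁ - 1 = 0)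
    (h2 : ρ₂^3 - a*ρ₂^2 - (a+3)*ρ₂ - 1 = 0)
    (h3 : ρ₃^3 - a*ρ₃^2 - (a+3)*ρ₃ - 1 = 0) (x y z : ℤ) (hx : x = -n₂) (hy : y = 2*k + n₂ - n₁)
    (hz : z = k*(a+1) + n₁) :
    (∃ β₁ β₂ : ℝ, β₁ ≤ β₂ ∧
        (k : ℝ)*β₁^2 + n₁*β₁ + n₂ = 0 ∧ (k : ℝ)*β₂^2 + n₁*β₂ + n₂ = 0 ∧
        ρ₁ ≤ β₁ ∧ β₁ ≤ ρ₂ ∧ ρ₂ ≤ β₂ ∧ β₂ ≤ ρ₃) ↔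
    (0 ≤ x ∧ 0 ≤ y ∧ 0 ≤ z ∧ scI a k x z ∧ scI a k y x ∧ scI a k z y) := by
  rw [sc_sign a k n₁ n₂ hk1 ρ₁ ρ₂ ρ₃ h12 h23 h2]
  obtain ⟨hρ, e2, e1⟩ := sc_roots a ha ρ₁ ρ₂ ρ₃ h12 h23 h1 h2 h3
  have ha' : (1:ℝ) ≤ a := by exact_mod_cast ha
  have hρ0 : 0 < ρ₃ := by linarith
  have hr0 : 0 < 1 + ρ₃ := by linarith
  have hx' : (x:ℝ) = -n₂ := by exact_mod_cast hx
  have hy' : (y:ℝ) = 2*k + n₂ - n₁ := by exact_mod_cast hy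
  have hz' : (z:ℝ) = k*(a+1) + n₁ := by exact_mod_cast hz
  have i2 : (k : ℝ)*ρ₂^2 + n₁*ρ₂ + n₂ ≤ 0 ↔ scR a k ρ₃ x z := by
    unfold scR
    rw [hx', hz']
    have key : (1+ρ₃)^2 * ((k : ℝ)*ρ₂^2 + n₁*ρ₂ + n₂) = k - ((1+ρ₃)*(k*(a+1) + n₁ - k*(a+1)) + (1+ρ₃)^2 * (-n₂)) := by
      linear_combination (k * (ρ₂*(1+ρ₃) - 1) + n₁*(1+ρ₃)) * e2
    have hp : 0 < (1+ρ₃)^2 := by positivity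
    rw [← sub_nonpos (a := (k:ℝ)), ← key]
    exact ⟨fun h => mul_nonpos_of_nonneg_of_nonpos hp.le h, fun h => nonpos_of_mul_nonpos_right h hp⟩
  have i1 : 0 ≤ (k : ℝ)*ρ₁^2 + n₁*ρ₁ + n₂ ↔ scR a k ρ₃ y x := by
    unfold scR
    rw [hx', hy']
    have key : ρ₃ * (1+ρ₃) * ((k : ℝ)*ρ₁^2 + n₁*ρ₁ + n₂) = 
        ((1+ρ₃)*(-n₂ - k*(a+1)) + (1+ρ₃)^2 * (2*k+n₂-n₁)) - k := by
      have : ρ₃ * (ρ₃ * (1+ρ₃) * ((k : ℝ)*ρ₁^2 + n₁*ρ₁ + n₂) - 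
        (((1+ρ₃)*(-n₂ - k*(a+1)) + (1+ρ₃)^2 * (2*k+n₂-n₁)) - k)) = 0 := by
        linear_combination (k * (1+ρ₃) * (ρ₁*ρ₃ - (1+ρ₃)) + n₁*ρ₃*(1+ρ₃)) * e1 - k * h3
      rcases mul_eq_zero.1 this with h | h <;> linarith
    have hp : 0 < ρ₃*(1+ρ₃) := by positivity
    rw [← sub_nonneg (b := (k:ℝ)), ← key]
    exact ⟨fun h => mul_nonneg hp.le h, fun h => nonneg_of_mul_nonneg_right h hp⟩
  have i3 : 0 ≤ (k : ℝ)*ρ₃^2 + n₁*ρ₃ + n₂ ↔ scR a k ρ₃ z y := by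
    unfold scR
    rw [hz', hy']
    have key : (1+ρ₃) * ((k : ℝ)*ρ₃^2 + n₁*ρ₃ + n₂) = 
        ((1+ρ₃)*(2*k+n₂-n₁ - k*(a+1)) + (1+ρ₃)^2 * (k*(a+1) + n₁)) - k := by
      linear_combination k * h3
    rw [← sub_nonneg (b := (k:ℝ)), ← key]
    exact ⟨fun h => mul_nonneg hr0.le h, fun h => nonneg_of_mul_nonneg_right h hr0⟩
  rw [i1, i2, i3]
  have hs : x + y + z = k*(a+3) := by rw [hx, hy, hz]; ring
  constructor
  · rintro ⟨r1, r2, r3⟩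
    have px := scR_nonneg a k ha hk1 hka ρ₃ hρ x y z hs r2 r1
    have py := scR_nonneg a k ha hk1 hka ρ₃ hρ y z x (by linarith) r1 r3
    have pz := scR_nonneg a k ha hk1 hka ρ₃ hρ z x y (by linarith) r3 r2
    exact ⟨px, py, pz, (scR_iff a k ha hk1 hka ρ₃ hρ h3 x z px pz).1 r2,
      (scR_iff a k ha hk1 hka ρ₃ hρ h3 y x py px).1 r1, (scR_iff a k ha hk1 hka ρ₃ hρ h3 z y pz py).1 r3⟩
  · rintro ⟨px, py, pz, r2, r1, r3⟩
    exact ⟨(scR_iff a k ha hk1 hka ρ₃ hρ h3 y x py px).2 r1, (scR_iff a k ha hk1 hka ρ₃ hρ h3 x z px pz).2 r2,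
       (scR_iff a k ha hk1 hka ρ₃ hρ h3 z y pz py).2 r3⟩

def scF (n : ℕ) (b : ℕ → ℕ) : Finset (ℤ × ℤ) :=
  ((Finset.range n).sigma (fun i => Finset.range (b i))).image (fun p => ((p.1:ℤ),(p.2:ℤ)))

theorem scF_card (n : ℕ) (b : ℕ → ℕ) : (scF n b).card = ∑ i ∈ Finset.range n, b i := by
  unfold scF
  rw [Finset.card_image_of_injective, Finset.card_sigma]
  · simp
  · rintro ⟨x, y⟩ ⟨x', y'⟩ h
    simp only [Prod.mk.injEq, Nat.cast_inj] at h
    obtain ⟨rfl, rfl⟩ := h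
    rfl

theorem scF_mem (n : ℕ) (b : ℕ → ℕ) (x y : ℤ) :
    (x, y) ∈ scF n b ↔ 0 ≤ x ∧ x < n ∧ 0 ≤ y ∧ y < b x.toNat := by
  unfold scF
  simp only [Finset.mem_image, Finset.mem_sigma, Finset.mem_range, Prod.mk.injEq, Sigma.exists]
  constructor
  · rintro ⟨i, j, ⟨hi, hj⟩, rfl, rfl⟩
    simp only [Int.toNat_natCast]
    omega
  · rintro ⟨h1, h2, h3, h4⟩
    exact ⟨x.toNat, y.toNat, ⟨by omega, by omega⟩, by omega, by omega⟩

def scb (K N : ℕ) (i : ℕ) : ℕ :=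
  ((K:ℤ)*(N+1) - (N+2)*i + (if 2*(i:ℤ) < K then 1 else 0)).toNat

theorem scb_cast (K N : ℕ) (hKN : K ≤ N) (i : ℕ) (hi : i < K) :
    (scb K N i : ℤ) = (K:ℤ)*(N+1) - (N+2)*i + (if 2*(i:ℤ) < K then 1 else 0) := by
  unfold scb
  apply Int.toNat_of_nonneg
  have : (0:ℤ) ≤ (if 2*(i:ℤ) < K then 1 else 0) := by split_ifs <;> norm_num
  have h1 : (i:ℤ) ≤ K - 1 := by omega
  have h2 : (K:ℤ) ≤ N := by exact_mod_cast hKN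
  nlinarith

theorem sc_half (K : ℕ) (n : ℕ) : (∑ i ∈ Finset.range n, (if 2*(i:ℤ) < K then (1:ℤ) else 0))
    = min (n:ℤ) ((K+1)/2) := by
  induction n with
  | zero => simp; omega
  | succ n ih =>
    rw [Finset.sum_range_succ, ih]
    split_ifs <;> push_cast <;> omega

theorem sc_sum_lin (A B : ℤ) (n : ℕ) :
    2 * (∑ i ∈ Finset.range n, (A - B * (i:ℤ))) = 2 * n * A - B * (n * (n - 1)) := by
  induction n with
  | zero => simp
  | succ n ih =>
    rw [Finset.sum_range_succ, mul_add, ih]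
    push_cast; ring

theorem scD_card (K N : ℕ) (hKN : K ≤ N) :
    2 * ((scF K (scb K N)).card : ℤ) = 2 * K * (K*(N+1)) - (N+2)*(K*(K-1)) + 2 * ((K+1)/2 : ℤ) := by
  rw [scF_card]
  push_cast
  rw [Finset.sum_congr rfl (fun i hi => scb_cast K N hKN i (Finset.mem_range.1 hi)),
    Finset.sum_add_distrib, mul_add, sc_half, sc_sum_lin]
  have : min (K:ℤ) ((K+1)/2) = (K+1)/2 := by omega
  rw [this]

theorem scT_card (S : ℕ) :
    2 * ((scF (S+1) (fun i => S+1-i)).card : ℤ) = (S+1)*(S+2) := by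
  rw [scF_card]
  push_cast
  rw [Finset.sum_congr rfl (g := fun i : ℕ => ((S:ℤ)+1) - 1 * (i:ℤ))
    (fun i hi => by have := Finset.mem_range.1 hi; push_cast [this.le]; omega), sc_sum_lin]
  push_cast; ring

theorem scD_mem (K N : ℕ) (hKN : K ≤ N) (x y : ℤ) :
    (x, y) ∈ scF K (scb K N) ↔ 0 ≤ x ∧ 0 ≤ y ∧ ¬ scI N K x y := by
  rw [scF_mem]
  unfold scI
  constructor
  · rintro ⟨h1, h2, h3, h4⟩
    have := scb_cast K N hKN x.toNat (by omega)
    rw [Int.toNat_of_nonneg h1] at this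
    refine ⟨h1, h3, ?_⟩
    push Not
    exact ⟨h2, by rw [← this]; exact h4⟩
  · rintro ⟨h1, h3, h4⟩
    push Not at h4
    have := scb_cast K N hKN x.toNat (by omega)
    rw [Int.toNat_of_nonneg h1] at this
    exact ⟨h1, h4.1, h3, by rw [this]; exact h4.2⟩

theorem sc_not_two (K N : ℕ) (x y z : ℤ) (hx : 0 ≤ x) (hs : x + y + z = K*(N+3))
    (h0 : ¬ scI N K x z) (h1 : ¬ scI N K y x) : False := by
  unfold scI at h0 h1
  push Not at h0 h1
  obtain ⟨h0, h0'⟩ := h0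
  obtain ⟨h1, h1'⟩ := h1
  have : (if 2*x < (K:ℤ) then (1:ℤ) else 0) ≤ 1 := by split_ifs <;> norm_num
  have : 0 ≤ ((N:ℤ)+2)*x := by positivity
  nlinarith

theorem sc_count (K N : ℕ) (hKN : K ≤ N) (A : Set (ℤ × ℤ))
    (hA : ∀ n₁ n₂ : ℤ, (n₁, n₂) ∈ A ↔
      (0 ≤ -n₂ ∧ 0 ≤ 2*K + n₂ - n₁ ∧ 0 ≤ K*(N+1) + n₁ ∧ scI N K (-n₂) (K*(N+1) + n₁) ∧
       scI N K (2*K + n₂ - n₁) (-n₂) ∧ scI N K (K*(N+1) + n₁) (2*K + n₂ - n₁))) :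
    (A.ncard : ℤ) + 3 * (scF K (scb K N)).card = (scF (K*(N+3)+1) (fun i => K*(N+3)+1-i)).card := by
  classical
  obtain ⟨D, hD⟩ : ∃ D, D = scF K (scb K N) := ⟨_, rfl⟩
  obtain ⟨T, hT⟩ : ∃ T, T = scF (K*(N+3)+1) (fun i => K*(N+3)+1-i) := ⟨_, rfl⟩
  obtain ⟨S, hS⟩ : ∃ S : ℤ, S = (K:ℤ)*(N+3) := ⟨_, rfl⟩
  have mD : ∀ x y, (x, y) ∈ D ↔ 0 ≤ x ∧ 0 ≤ y ∧ ¬ scI N K x y := by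
    intro x y; rw [hD]; exact scD_mem K N hKN x y
  have mT : ∀ x y, (x, y) ∈ T ↔ 0 ≤ x ∧ 0 ≤ y ∧ 0 ≤ S - x - y := by
    intro x y
    have : ((K*(N+3) : ℕ) : ℤ) = S := by rw [hS]; push_cast; ring
    rw [hT, scF_mem]
    generalize K*(N+3) = S' at *
    omega
  have bD : ∀ x y, (x, y) ∈ D → x + y ≤ S := by
    intro x y h
    obtain ⟨h1, h2, h3⟩ := (mD x y).1 h
    unfold scI at h3
    push Not at h3
    obtain ⟨h3, h4⟩ := h3
    have : (if 2*x < (K:ℤ) then (1:ℤ) else 0) ≤ 1 := by split_ifs <;> norm_num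
    have : 0 ≤ ((N:ℤ)+1)*x := by positivity
    nlinarith
  rw [← hD, ← hT]
  obtain ⟨B0, hB0⟩ : ∃ B, B = D.image (fun p => (p.1, S - p.1 - p.2)) := ⟨_, rfl⟩
  obtain ⟨B1, hB1⟩ : ∃ B, B = D.image (fun p => (p.2, p.1)) := ⟨_, rfl⟩
  obtain ⟨B2, hB2⟩ : ∃ B, B = D.image (fun p => (S - p.1 - p.2, p.2)) := ⟨_, rfl⟩
  have c0 : B0.card = D.card := by
    rw [hB0]; apply Finset.card_image_of_injective
    rintro ⟨x, y⟩ ⟨x', y'⟩ h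
    simp only [Prod.mk.injEq] at h ⊢
    omega
  have c1 : B1.card = D.card := by
    rw [hB1]; apply Finset.card_image_of_injective
    rintro ⟨x, y⟩ ⟨x', y'⟩ h
    simp only [Prod.mk.injEq] at h ⊢
    omega
  have c2 : B2.card = D.card := by
    rw [hB2]; apply Finset.card_image_of_injective
    rintro ⟨x, y⟩ ⟨x', y'⟩ h
    simp only [Prod.mk.injEq] at h ⊢
    omega
  have m0 : ∀ x y, (x, y) ∈ B0 ↔ (x, S - x - y) ∈ D := by
    intro x y
    rw [hB0, Finset.mem_image]
    constructor
    · rintro ⟨⟨u, v⟩, h, e⟩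
      simp only [Prod.mk.injEq] at e
      obtain ⟨rfl, rfl⟩ := e
      convert h using 2; ring
    · intro h
      exact ⟨_, h, by simp⟩
  have m1 : ∀ x y, (x, y) ∈ B1 ↔ (y, x) ∈ D := by
    intro x y
    rw [hB1, Finset.mem_image]
    constructor
    · rintro ⟨⟨u, v⟩, h, e⟩
      simp only [Prod.mk.injEq] at e
      obtain ⟨rfl, rfl⟩ := e
      exact h
    · intro h
      exact ⟨_, h, by simp⟩
  have m2 : ∀ x y, (x, y) ∈ B2 ↔ (S - x - y, y) ∈ D := by
    intro x y
    rw [hB2, Finset.mem_image]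
    constructor
    · rintro ⟨⟨u, v⟩, h, e⟩
      simp only [Prod.mk.injEq] at e
      obtain ⟨rfl, rfl⟩ := e
      convert h using 2; ring
    · intro h
      exact ⟨_, h, by simp only [Prod.mk.injEq, and_true]; ring⟩
  have d01 : Disjoint B0 B1 := by
    rw [Finset.disjoint_left]
    rintro ⟨x, y⟩ h h'
    have h := (mD _ _).1 ((m0 x y).1 h)
    have h' := (mD _ _).1 ((m1 x y).1 h')
    exact sc_not_two K N x y (S - x - y) h.1 (by rw [← hS]; ring) h.2.2 h'.2.2
  have d12 : Disjoint B1 B2 := by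
    rw [Finset.disjoint_left]
    rintro ⟨x, y⟩ h h'
    have h := (mD _ _).1 ((m1 x y).1 h)
    have h' := (mD _ _).1 ((m2 x y).1 h')
    exact sc_not_two K N y (S - x - y) x h.1 (by rw [← hS]; ring) h.2.2 h'.2.2
  have d20 : Disjoint B0 B2 := by
    rw [Finset.disjoint_left]
    rintro ⟨x, y⟩ h h'
    have h := (mD _ _).1 ((m0 x y).1 h)
    have h' := (mD _ _).1 ((m2 x y).1 h')
    exact sc_not_two K N (S - x - y) x y h'.1 (by rw [← hS]; ring) h'.2.2 h.2.2
  have dU : Disjoint (B0 ∪ B1) B2 := Finset.disjoint_union_left.2 ⟨d20, d12⟩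
  have hsub : (B0 ∪ B1) ∪ B2 ⊆ T := by
    rintro ⟨x, y⟩ h
    rw [mT]
    rcases Finset.mem_union.1 h with h | h
    · rcases Finset.mem_union.1 h with h | h
      · have h := (m0 x y).1 h
        have := bD _ _ h
        have := (mD _ _).1 h
        omega
      · have h := (m1 x y).1 h
        have := bD _ _ h
        have := (mD _ _).1 h
        omega
    · have h := (m2 x y).1 h
      have := bD _ _ h
      have := (mD _ _).1 h
      omega
  have hAG : A = (fun p : ℤ × ℤ => ((2*K - p.1 - p.2, -p.1) : ℤ × ℤ)) '' ((T \ ((B0 ∪ B1) ∪ B2) : Finset (ℤ×ℤ)) : Set (ℤ × ℤ)) := by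
    have mG : ∀ x y, (x, y) ∈ T \ ((B0 ∪ B1) ∪ B2) ↔ (0 ≤ x ∧ 0 ≤ y ∧ 0 ≤ S - x - y ∧ scI N K x (S-x-y) ∧ scI N K y x ∧ scI N K (S-x-y) y) := by
      intro x y
      rw [Finset.mem_sdiff, Finset.mem_union, Finset.mem_union, mT, m0, m1, m2, mD, mD, mD]
      generalize scI N K x (S-x-y) = P1
      generalize scI N K y x = P2
      generalize scI N K (S-x-y) y = P3
      generalize (0 ≤ x) = Q1
      generalize (0 ≤ y) = Q2
      generalize (0 ≤ S - x - y) = Q3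
      clear * -
      by_cases Q1 <;> by_cases Q2 <;> by_cases Q3 <;> simp_all [and_assoc]
    ext ⟨n₁, n₂⟩
    rw [hA, Set.mem_image]
    constructor
    · intro h
      refine ⟨(-n₂, 2*K + n₂ - n₁), ?_, by simp⟩
      rw [Finset.mem_coe, mG]
      have : S - -n₂ - (2*K + n₂ - n₁) = K*(N+1) + n₁ := by rw [hS]; ring
      rw [this]; exact h
    · rintro ⟨⟨x, y⟩, h, e⟩
      rw [Finset.mem_coe, mG] at h
      simp only [Prod.mk.injEq] at e
      obtain ⟨rfl, rfl⟩ := e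
      have e1 : (K:ℤ)*(N+1) + (2*K - x - y) = S - x - y := by rw [hS]; ring
      have e2 : 2*(K:ℤ) + -x - (2*K - x - y) = y := by ring
      rw [e1, e2, neg_neg]; exact h
  have hcard : A.ncard = (T \ ((B0 ∪ B1) ∪ B2)).card := by
    rw [hAG, Set.ncard_image_of_injective, Set.ncard_coe_finset]
    rintro ⟨x, y⟩ ⟨x', y'⟩ h
    simp only [Prod.mk.injEq] at h ⊢
    omega
  have h1 := Finset.card_sdiff_add_card_eq_card hsub
  rw [Finset.card_union_of_disjoint dU, Finset.card_union_of_disjoint d01, c0, c1, c2] at h1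
  omega

theorem simplest_cubic_interlacing_count (a k : ℤ) (ha : 1 ≤ a)
    (hk1 : 1 ≤ k) (hka : k ≤ a) (ρ₁ ρ₂ ρ₃ : ℝ)
    (h12 : ρ₁ < ρ₂) (h23 : ρ₂ < ρ₃)
    (h1 : ρ₁^3 - a*ρ₁^2 - (a+3)*ρ₁ - 1 = 0)
    (h2 : ρ₂^3 - a*ρ₂^2 - (a+3)*ρ₂ - 1 = 0)
    (h3 : ρ₃^3 - a*ρ₃^2 - (a+3)*ρ₃ - 1 = 0) :
    (Set.ncard {p : ℤ × ℤ | ∃ β₁ β₂ : ℝ, β₁ ≤ β₂ ∧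
        (k : ℝ)*β₁^2 + p.1*β₁ + p.2 = 0 ∧ (k : ℝ)*β₂^2 + p.1*β₂ + p.2 = 0 ∧
        ρ₁ ≤ β₁ ∧ β₁ ≤ ρ₂ ∧ ρ₂ ≤ β₂ ∧ β₂ ≤ ρ₃} : ℝ) =
      k^2 * (a^2 + 3*a + 9) / 2 + (if Even k then 1 else -1/2) := by
  obtain ⟨N, hN⟩ := Int.eq_ofNat_of_zero_le (by omega : 0 ≤ a)
  obtain ⟨K, hK⟩ := Int.eq_ofNat_of_zero_le (by omega : 0 ≤ k)
  have hc := sc_count K N (by omega) {p : ℤ × ℤ | ∃ β₁ β₂ : ℝ, β₁ ≤ β₂ ∧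
        (k : ℝ)*β₁^2 + p.1*β₁ + p.2 = 0 ∧ (k : ℝ)*β₂^2 + p.1*β₂ + p.2 = 0 ∧
        ρ₁ ≤ β₁ ∧ β₁ ≤ ρ₂ ∧ ρ₂ ≤ β₂ ∧ β₂ ≤ ρ₃} (by
    intro n₁ n₂
    rw [← hK, ← hN]
    exact sc_mem_iff a k n₁ n₂ ha hk1 hka ρ₁ ρ₂ ρ₃ h12 h23 h1 h2 h3 _ _ _ rfl rfl rfl)
  have hd := scD_card K N (by omega)
  have ht := scT_card (K*(N+3))
  push_cast at ht
  rw [← hK, ← hN] at hd ht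
  generalize Set.ncard _ = M at hc ⊢
  have hM : 2 * (M:ℤ) = (k*(a+3)+1)*(k*(a+3)+2) - 3 * (2*k*(k*(a+1)) - (a+2)*(k*(k-1)) + 2*((k+1)/2)) := by
    linarith
  have h2M : 2 * (M:ℤ) = k^2*(a^2+3*a+9) + (if Even k then 2 else -1) := by
    rw [hM]
    split_ifs with he
    · obtain ⟨t, rfl⟩ := he
      have : (t + t + 1)/2 = t := by omega
      rw [this]; ring
    · obtain ⟨t, rfl⟩ := Int.not_even_iff_odd.1 he
      have : (2*t + 1 + 1)/2 = t + 1 := by omega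
      rw [this]; ring
  have hR : 2 * (M:ℝ) = k^2*(a^2+3*a+9) + (if Even k then 2 else -1) := by
    have := congrArg (fun z : ℤ => (z:ℝ)) h2M
    push_cast at this
    exact this
  split_ifs at hR ⊢ <;> linarith
end
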